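/- The metric d[l] on S is intrinsic: for all x, y ∈ S, d[l](x,y) = inf{ L(γ, d[l]) : γ : [0,1] → S continuous, γ(0) = x, γ(1) = y }. -/

import Mathlib

noncomputable section

open Set
open scoped ENNReal

/-- The Euclidean plane `ℝ²` with the Euclidean metric. -/
abbrev E2 : Type := EuclideanSpace ℝ (Fin 2)

/-- Vertices of the fixed closed regular (equilateral) triangle of side length 1. -/
def p0 : E2 := !₂[0, 0]
def p1 : E2 := !₂[1, 0]
def p2 : E2 := !₂[1 / 2, Real.sqrt 3 / 2]

/-- `Dtri` is the fixed closed regular triangle in `ℝ²` with edge length 1. -/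
def Dtri : Set E2 := convexHull ℝ {p0, p1, p2}

/-- `V0` is the set of the three vertices of `Dtri`. -/
def V0 : Set E2 := {p0, p1, p2}

/-- The three closed edges of `Dtri`. -/
def e01 : Set E2 := segment ℝ p0 p1
def e12 : Set E2 := segment ℝ p1 p2
def e02 : Set E2 := segment ℝ p0 p2

/-- `E0` is the set of the three closed edges of `Dtri`. -/
def E0 : Set (Set E2) := {e01, e12, e02}

/-- The open edge `e° = e ∖ V₀`. -/
def eo (e : Set E2) : Set E2 := e \ V0

/-- `Do = D°` is the interior of `Dtri` in `ℝ²`. -/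
def Do : Set E2 := interior Dtri

/-- `l : E₀ → ℝ` is positive and satisfies the strict triangle inequalities:
`l e₁ + l e₂ > l e₃` whenever `{e₁, e₂, e₃} = E₀`. -/
def TriIneq (l : Set E2 → ℝ) : Prop :=
  (∀ e ∈ E0, 0 < l e) ∧
  ∀ e₁ e₂ e₃ : Set E2, ({e₁, e₂, e₃} : Set (Set E2)) = E0 → l e₁ + l e₂ > l e₃

/-- A linear map `f : ℝ² → ℝ²` realizes the edge lengths `l`, i.e. for each `e ∈ E₀`
the segment `f(e)` has Euclidean length `l e`. -/
def Realizes (f : E2 →ₗ[ℝ] E2) (l : Set E2 → ℝ) : Prop :=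
  dist (f p0) (f p1) = l e01 ∧ dist (f p1) (f p2) = l e12 ∧ dist (f p0) (f p2) = l e02

/-- The metric `d[l]` on `Dtri`, defined by `d[l](x,y) = |f x - f y|₂` for a linear map `f`
realizing the edge lengths `l` (this is independent of the choice of `f`). -/
def dD (l : Set E2 → ℝ) (x y : E2) : ℝ :=
  letI := Classical.propDecidable (∃ f : E2 →ₗ[ℝ] E2, Realizes f l)
  if h : ∃ f : E2 →ₗ[ℝ] E2, Realizes f l then dist (h.choose x) (h.choose y) else 0

/-- A triangulation `T = (σᵢ)_{i ∈ I}`, `I = Fin n`, of a topological space `S`: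
a finite family of continuous maps `σᵢ : Dtri → S` such that
(a) `σᵢ` is injective on each open edge, (b) `σᵢ` is injective on `D°`,
(c) `S` is the disjoint union of `⋃ᵢ σᵢ(V₀)`, the sets `σᵢ(D°)`, and the distinct sets
among the `σᵢ(e°)`, and (d) glued edges are identified by a linear homeomorphism. -/
structure Triangulation (S : Type) [TopologicalSpace S] (n : ℕ) where
  σ : Fin n → E2 → S
  continuousOn : ∀ i, ContinuousOn (σ i) Dtri
  inj_edge : ∀ i, ∀ e ∈ E0, InjOn (σ i) (eo e)
  inj_int : ∀ i, InjOn (σ i) Do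
  cover : (⋃ i, σ i '' V0) ∪ (⋃ i, σ i '' Do) ∪ (⋃ i, ⋃ e ∈ E0, σ i '' eo e) = univ
  disj_int : ∀ i j, i ≠ j → Disjoint (σ i '' Do) (σ j '' Do)
  disj_vert_int : ∀ j, Disjoint (⋃ i, σ i '' V0) (σ j '' Do)
  disj_vert_edge : ∀ j, ∀ e ∈ E0, Disjoint (⋃ i, σ i '' V0) (σ j '' eo e)
  disj_int_edge : ∀ i j, ∀ e ∈ E0, Disjoint (σ i '' Do) (σ j '' eo e)
  edge_eq_or_disjoint : ∀ i j, ∀ e ∈ E0, ∀ e' ∈ E0,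
    σ i '' eo e = σ j '' eo e' ∨ Disjoint (σ i '' eo e) (σ j '' eo e')
  glue : ∀ i j, ∀ e ∈ E0, ∀ e' ∈ E0, σ i '' eo e = σ j '' eo e' →
    ∃ A : E2 →ᵃ[ℝ] E2, A '' e = e' ∧ ∀ x ∈ e, σ j (A x) = σ i x

variable {S : Type} [TopologicalSpace S] {n : ℕ}

/-- `l ∈ ℝ^{E(T)}_Δ`: `l` assigns positive lengths to the edges of `T` satisfying the
strict triangle inequalities in each triangle. -/
def TriIneqT (T : Triangulation S n) (l : Set S → ℝ) : Prop :=
  (∀ (i : Fin n), ∀ e ∈ E0, 0 < l (T.σ i '' e)) ∧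
  ∀ (i : Fin n), ∀ e₁ e₂ e₃ : Set E2, ({e₁, e₂, e₃} : Set (Set E2)) = E0 →
    l (T.σ i '' e₁) + l (T.σ i '' e₂) > l (T.σ i '' e₃)

/-- The restricted edge lengths `l^{(i)}` on the triangle `σᵢ(D)`: `l^{(i)}_e = l_{σᵢ(e)}`. -/
def lRes (T : Triangulation S n) (l : Set S → ℝ) (i : Fin n) : Set E2 → ℝ :=
  fun e => l (T.σ i '' e)

/-- `dᵢ(x,y) = min { d[l^{(i)}](x',y') : x' ∈ σᵢ⁻¹(x), y' ∈ σᵢ⁻¹(y) }` for `x, y ∈ σᵢ(D)`. -/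
def dTri (T : Triangulation S n) (l : Set S → ℝ) (i : Fin n) (x y : S) : ℝ :=
  sInf { r | ∃ x' ∈ Dtri, ∃ y' ∈ Dtri,
    T.σ i x' = x ∧ T.σ i y' = y ∧ r = dD (lRes T l i) x' y' }

/-- The set of sums `Σ_j d_{i_j}(x_{j-1}, x_j)` over chains from `x` to `y`. -/
def chainSums (T : Triangulation S n) (l : Set S → ℝ) (x y : S) : Set ℝ :=
  { r | ∃ (k : ℕ) (c : ℕ → S) (idx : ℕ → Fin n),
      c 0 = x ∧ c k = y ∧
      (∀ j < k, c j ∈ T.σ (idx j) '' Dtri ∧ c (j + 1) ∈ T.σ (idx j) '' Dtri) ∧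
      r = ∑ j ∈ Finset.range k, dTri T l (idx j) (c j) (c (j + 1)) }

/-- The glued metric `d[l]` on `S`. -/
def dGlue (T : Triangulation S n) (l : Set S → ℝ) (x y : S) : ℝ :=
  sInf (chainSums T l x y)

/-- The length `L(γ, d)` of a curve `γ : [0,1] → X` with respect to a metric `d`:
`L(γ,d) = sup { Σ_j d(γ t_{j-1}, γ t_j) : 0 = t₀ < t₁ < ... < t_k = 1 }`, valued in `[0,∞]`. -/
def pathLen {X : Type} (d : X → X → ℝ) (γ : ℝ → X) : ℝ≥0∞ :=
  ⨆ (k : ℕ) (t : Fin (k + 1) → ℝ) (_ : StrictMono t ∧ t 0 = 0 ∧ t (Fin.last k) = 1),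
    ENNReal.ofReal (∑ j : Fin k, d (γ (t j.castSucc)) (γ (t j.succ)))

theorem dD_nonneg' (l : Set E2 → ℝ) (x y : E2) : 0 ≤ dD l x y := by
  unfold dD
  split_ifs
  · exact dist_nonneg
  · exact le_rfl

theorem dD_lineMap' (l : Set E2 → ℝ) (x y : E2) {s t : ℝ} (hst : s ≤ t) :
    dD l (AffineMap.lineMap x y s) (AffineMap.lineMap x y t) = (t - s) * dD l x y := by
  unfold dD
  split_ifs with h
  · generalize h.choose = f
    have key : ∀ u : ℝ, f (AffineMap.lineMap x y u) = AffineMap.lineMap (f x) (f y) u := by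
      intro u
      simp [AffineMap.lineMap_apply]
    rw [key, key, dist_lineMap_lineMap, Real.dist_eq, abs_sub_comm, abs_of_nonneg (by linarith)]
  · simp

theorem dTri_nonneg' (T : Triangulation S n) (l : Set S → ℝ) (i : Fin n) (x y : S) :
    0 ≤ dTri T l i x y := by
  apply Real.sInf_nonneg
  rintro r ⟨x', _, y', _, _, _, rfl⟩
  exact dD_nonneg' _ _ _

theorem dTri_le' (T : Triangulation S n) (l : Set S → ℝ) (i : Fin n) {a b : E2}
    (ha : a ∈ Dtri) (hb : b ∈ Dtri) :
    dTri T l i (T.σ i a) (T.σ i b) ≤ dD (lRes T l i) a b := by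
  apply csInf_le
  · refine ⟨0, ?_⟩
    rintro r ⟨x', _, y', _, _, _, rfl⟩
    exact dD_nonneg' _ _ _
  · exact ⟨a, ha, b, hb, rfl, rfl, rfl⟩

theorem chain_bddBelow (T : Triangulation S n) (l : Set S → ℝ) (x y : S) :
    BddBelow (chainSums T l x y) := by
  refine ⟨0, ?_⟩
  rintro r ⟨k, c, idx, _, _, _, rfl⟩
  exact Finset.sum_nonneg fun j _ => dTri_nonneg' _ _ _ _ _

theorem chain_append (T : Triangulation S n) (l : Set S → ℝ) {x y z : S} {r : ℝ} (i : Fin n)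
    (hr : r ∈ chainSums T l x y) (hy : y ∈ T.σ i '' Dtri) (hz : z ∈ T.σ i '' Dtri) :
    r + dTri T l i y z ∈ chainSums T l x z := by
  obtain ⟨k, c, idx, h0, hk, hc, rfl⟩ := hr
  refine ⟨k + 1, fun j => if j ≤ k then c j else z, fun j => if j < k then idx j else i,
    by simp [h0], by simp, ?_, ?_⟩
  · intro j hj
    rcases Nat.lt_succ_iff_lt_or_eq.1 hj with h | h
    · have h1 : j ≤ k := h.le
      have h2 : j + 1 ≤ k := h
      simp only [h, h1, h2, if_true]
      exact hc j h
    · subst h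
      simp [hk, hy, hz]
  · rw [Finset.sum_range_succ]
    congr 1
    · apply Finset.sum_congr rfl
      intro j hj
      have h := Finset.mem_range.1 hj
      have h1 : j ≤ k := h.le
      have h2 : j + 1 ≤ k := h
      simp only [h, h1, h2, if_true]
    · simp [hk]

theorem eo_sub {e : Set E2} (he : e ∈ E0) : e ⊆ Dtri := by
  have hc : Convex ℝ Dtri := convex_convexHull ℝ _
  have h0 : p0 ∈ Dtri := subset_convexHull ℝ _ (by simp)
  have h1 : p1 ∈ Dtri := subset_convexHull ℝ _ (by simp)
  have h2 : p2 ∈ Dtri := subset_convexHull ℝ _ (by simp)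
  rcases he with rfl | rfl | rfl
  · exact hc.segment_subset h0 h1
  · exact hc.segment_subset h1 h2
  · exact hc.segment_subset h0 h2

theorem mem_some_tri (T : Triangulation S n) (x : S) : ∃ i, x ∈ T.σ i '' Dtri := by
  have hx : x ∈ (univ : Set S) := mem_univ x
  rw [← T.cover] at hx
  rcases hx with (hx | hx) | hx
  · obtain ⟨i, hi⟩ := mem_iUnion.1 hx
    exact ⟨i, image_mono (subset_convexHull ℝ _) hi⟩
  · obtain ⟨i, hi⟩ := mem_iUnion.1 hx
    exact ⟨i, image_mono interior_subset hi⟩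
  · simp only [mem_iUnion] at hx
    obtain ⟨i, e, he, hi⟩ := hx
    exact ⟨i, image_mono (sdiff_subset.trans (eo_sub he)) hi⟩

theorem chain_refl (T : Triangulation S n) (l : Set S → ℝ) (x : S) :
    (0 : ℝ) ∈ chainSums T l x x := by
  obtain ⟨i, _⟩ := mem_some_tri T x
  exact ⟨0, fun _ => x, fun _ => i, rfl, rfl, by simp, by simp⟩

theorem tri_closed [T2Space S] (T : Triangulation S n) (i : Fin n) :
    IsClosed (T.σ i '' Dtri) := by
  have : IsCompact Dtri := (Set.toFinite _).isCompact_convexHull ℝ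
  exact (this.image_of_continuousOn (T.continuousOn i)).isClosed

theorem chain_nonempty [T2Space S] [ConnectedSpace S] (T : Triangulation S n) (l : Set S → ℝ)
    (x y : S) : (chainSums T l x y).Nonempty := by
  set C : Set S := {z | (chainSums T l x z).Nonempty} with hC
  have key : ∀ i z w, z ∈ T.σ i '' Dtri → w ∈ T.σ i '' Dtri → z ∈ C → w ∈ C := by
    rintro i z w hz hw ⟨r, hr⟩
    exact ⟨_, chain_append T l i hr hz hw⟩
  have h1 : C = ⋃ i ∈ {i | T.σ i '' Dtri ⊆ C}, T.σ i '' Dtri := by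
    apply Subset.antisymm
    · intro z hz
      obtain ⟨i, hi⟩ := mem_some_tri T z
      exact mem_biUnion (x := i) (fun w hw => key i z w hi hw hz) hi
    · exact iUnion₂_subset fun i hi => hi
  have h2 : Cᶜ = ⋃ i ∈ {i | T.σ i '' Dtri ⊆ Cᶜ}, T.σ i '' Dtri := by
    apply Subset.antisymm
    · intro z hz
      obtain ⟨i, hi⟩ := mem_some_tri T z
      exact mem_biUnion (x := i) (fun w hw hwC => hz (key i w z hw hi hwC)) hi
    · exact iUnion₂_subset fun i hi => hi
  have c1 : IsClosed C := by
    rw [h1]; exact (Set.toFinite _).isClosed_biUnion fun i _ => tri_closed T i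
  have c2 : IsClosed Cᶜ := by
    rw [h2]; exact (Set.toFinite _).isClosed_biUnion fun i _ => tri_closed T i
  have : C = univ := IsClopen.eq_univ ⟨c1, isClosed_compl_iff.1 c2⟩ ⟨x, 0, chain_refl T l x⟩
  have hy : y ∈ C := this ▸ mem_univ y
  exact hy

theorem chain_path (T : Triangulation S n) (l : Set S → ℝ) (c : ℕ → S) (idx : ℕ → Fin n)
    {ε : ℝ} (hε : 0 < ε) (k : ℕ)
    (hc : ∀ j < k, c j ∈ T.σ (idx j) '' Dtri ∧ c (j + 1) ∈ T.σ (idx j) '' Dtri) :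
    ∃ (γ : ℝ → S) (F : ℝ → ℝ), ContinuousOn γ (Icc (0 : ℝ) k) ∧ γ 0 = c 0 ∧ γ k = c k ∧
      F 0 = 0 ∧ F k ≤ ∑ j ∈ Finset.range k, (dTri T l (idx j) (c j) (c (j + 1)) + ε) ∧
      ∀ s t : ℝ, 0 ≤ s → s ≤ t → t ≤ k → ∃ r ∈ chainSums T l (γ s) (γ t), r ≤ F t - F s := by
  induction k with
  | zero =>
    refine ⟨fun _ => c 0, fun _ => 0, continuousOn_const, rfl, rfl, rfl, by simp, ?_⟩
    intro s t _ _ _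
    exact ⟨0, chain_refl T l _, by simp⟩
  | succ k ih =>
    obtain ⟨γ, F, hγ, hγ0, hγk, hF0, hFk, hF⟩ := ih fun j hj => hc j (by omega)
    obtain ⟨⟨a0, ha0, ea0⟩, ⟨b0, hb0, eb0⟩⟩ := hc k (by omega)
    set i := idx k with hi
    have hne : { r | ∃ x' ∈ Dtri, ∃ y' ∈ Dtri, T.σ i x' = c k ∧ T.σ i y' = c (k + 1) ∧
        r = dD (lRes T l i) x' y' }.Nonempty := ⟨_, a0, ha0, b0, hb0, ea0, eb0, rfl⟩
    obtain ⟨_, ⟨a, ha, b, hb, ea, eb, rfl⟩, hlt⟩ := Real.lt_sInf_add_pos hne hε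
    change dD (lRes T l i) a b < dTri T l i (c k) (c (k + 1)) + ε at hlt
    set D := dD (lRes T l i) a b with hD
    have hcv : Convex ℝ Dtri := convex_convexHull ℝ _
    have hmem : ∀ u : ℝ, 0 ≤ u → u ≤ 1 → (AffineMap.lineMap a b u : E2) ∈ Dtri :=
      fun u h0 h1 => hcv.lineMap_mem ha hb ⟨h0, h1⟩
    set g : ℝ → S := fun t => T.σ i (AffineMap.lineMap a b (t - k)) with hg
    have hgk : g k = c k := by simp [hg, ea]
    have hgc : ContinuousOn g (Icc (k : ℝ) (k + 1)) := by
      refine (T.continuousOn i).comp (s := Icc (k : ℝ) (k + 1))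
        (f := fun t : ℝ => (AffineMap.lineMap a b (t - k) : E2)) ?_ ?_
      · apply Continuous.continuousOn
        exact AffineMap.lineMap_continuous.comp (continuous_id.sub continuous_const)
      · intro t ht
        exact hmem _ (by linarith [ht.1]) (by linarith [ht.2])
    have hstep : ∀ s t : ℝ, k ≤ s → s ≤ t → t ≤ k + 1 →
        dTri T l i (g s) (g t) ≤ (t - s) * D := by
      intro s t h1 h2 h3
      have := dTri_le' T l i (hmem (s - k) (by linarith) (by linarith))
        (hmem (t - k) (by linarith) (by linarith))
      rw [dD_lineMap' _ _ _ (by linarith)] at this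
      convert this using 2
      ring
    have hgmem : ∀ t : ℝ, k ≤ t → t ≤ k + 1 → g t ∈ T.σ i '' Dtri := fun t h1 h2 =>
      ⟨_, hmem (t - k) (by linarith) (by linarith), rfl⟩
    have hk0 : (0 : ℝ) ≤ k := Nat.cast_nonneg k
    refine ⟨fun t => if t ≤ k then γ t else g t,
      fun t => if t ≤ k then F t else F k + (t - k) * D, ?_, ?_, ?_, ?_, ?_, ?_⟩
    · have e : Icc (0 : ℝ) ((k + 1 : ℕ) : ℝ) = Icc (0 : ℝ) k ∪ Icc (k : ℝ) (k + 1) := by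
        rw [Icc_union_Icc_eq_Icc hk0 (by linarith)]; push_cast; rfl
      rw [e]
      apply ContinuousOn.union_of_isClosed _ _ isClosed_Icc isClosed_Icc
      · exact hγ.congr fun t ht => if_pos ht.2
      · refine hgc.congr fun t ht => ?_
        by_cases h : t ≤ k
        · have : t = k := le_antisymm h ht.1
          subst this
          simp [hγk, hgk]
        · simp [h]
    · simp [hγ0]
    · have : ¬ (((k + 1 : ℕ) : ℝ) ≤ k) := by push_cast; linarith
      simp only [this, if_false, hg]
      simp [eb]
    · simp [hF0]
    · have : ¬ (((k + 1 : ℕ) : ℝ) ≤ k) := by push_cast; linarith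
      simp only [this, if_false]
      rw [Finset.sum_range_succ]
      push_cast
      nlinarith
    · intro s t hs hst ht
      push_cast at ht
      by_cases h : t ≤ k
      · have h' : s ≤ k := hst.trans h
        simp only [h, h', if_true]
        exact hF s t hs hst h
      · have hkt : (k : ℝ) ≤ t := (not_le.1 h).le
        by_cases h' : s ≤ k
        · simp only [h, h', if_true, if_false]
          obtain ⟨r, hr, hle⟩ := hF s k hs h' le_rfl
          rw [hγk] at hr
          refine ⟨_, chain_append T l i hr ⟨a, ha, ea⟩ (hgmem t hkt ht), ?_⟩
          have := hstep k t le_rfl hkt ht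
          rw [hgk] at this
          linarith
        · have hks : (k : ℝ) ≤ s := (not_le.1 h').le
          simp only [h, h', if_false]
          refine ⟨_, chain_append T l i (chain_refl T l (g s)) (hgmem s hks (hst.trans ht))
            (hgmem t hkt ht), ?_⟩
          have := hstep s t hks hst ht
          linarith

theorem pathLen_le' {X : Type} (d : X → X → ℝ) (γ : ℝ → X) (F : ℝ → ℝ)
    (h : ∀ s t : ℝ, 0 ≤ s → s ≤ t → t ≤ 1 → d (γ s) (γ t) ≤ F t - F s) :
    pathLen d γ ≤ ENNReal.ofReal (F 1 - F 0) := by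
  refine iSup_le fun k => iSup_le fun t => iSup_le fun ht => ?_
  obtain ⟨hm, h0, h1⟩ := ht
  apply ENNReal.ofReal_le_ofReal
  have e : ∑ j : Fin k, (F (t j.succ) - F (t j.castSucc)) = F 1 - F 0 := by
    rw [← h0, ← h1, Finset.sum_sub_distrib]
    have a := Fin.sum_univ_succ (fun j : Fin (k + 1) => F (t j))
    have b := Fin.sum_univ_castSucc (fun j : Fin (k + 1) => F (t j))
    linarith
  rw [← e]
  refine Finset.sum_le_sum fun j _ => h _ _ ?_ ?_ ?_
  · rw [← h0]; exact hm.monotone (Fin.zero_le _)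
  · exact hm.monotone (Fin.castSucc_lt_succ).le
  · rw [← h1]; exact hm.monotone (Fin.le_last _)

/-- the metric `d[l]` on `S` is intrinsic: for all `x, y ∈ S`,
`d[l](x,y) = inf { L(γ, d[l]) : γ : [0,1] → S continuous, γ 0 = x, γ 1 = y }`. -/
theorem dGlue_intrinsic
    {S : Type} [TopologicalSpace S] [CompactSpace S] [T2Space S] [ConnectedSpace S]
    {n : ℕ} (T : Triangulation S n) (l : Set S → ℝ) (hl : TriIneqT T l) :
    ∀ x y : S, ENNReal.ofReal (dGlue T l x y) =
      ⨅ (γ : ℝ → S) (_ : ContinuousOn γ (Icc (0:ℝ) 1) ∧ γ 0 = x ∧ γ 1 = y),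
        pathLen (dGlue T l) γ := by
  intro x y
  apply le_antisymm
  · refine le_iInf fun γ => le_iInf fun hγ => ?_
    obtain ⟨_, h0, h1⟩ := hγ
    unfold pathLen
    refine le_iSup_of_le 1 (le_iSup_of_le (fun j : Fin 2 => (j : ℕ) : Fin 2 → ℝ)
      (le_iSup_of_le ⟨?_, by simp, by simp⟩ ?_))
    · intro a b hab
      simpa using hab
    · simp [h0, h1]
  · refine ENNReal.le_of_forall_pos_le_add fun ε hε _ => ?_
    have hε' : (0 : ℝ) < ε := hε
    obtain ⟨_, ⟨k, c, idx, h0, hk, hc, rfl⟩, hlt⟩ :=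
      Real.lt_sInf_add_pos (chain_nonempty T l x y) (half_pos hε')
    change _ < dGlue T l x y + _ at hlt
    have hδ : (0 : ℝ) < ε / 2 / (k + 1) := by positivity
    obtain ⟨γ, F, hγ, hγ0, hγk, hF0, hFk, hF⟩ := chain_path T l c idx hδ k hc
    have hk0 : (0 : ℝ) ≤ k := Nat.cast_nonneg k
    have hsmall : (k : ℝ) * (ε / 2 / (k + 1)) ≤ ε / 2 := by
      rw [mul_div_assoc', div_le_iff₀ (by positivity)]
      nlinarith
    have hpl : pathLen (dGlue T l) (fun t => γ (k * t)) ≤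
        ENNReal.ofReal (F (k * 1) - F (k * 0)) := by
      apply pathLen_le' (dGlue T l) (fun t => γ (k * t)) (fun t => F (k * t))
      intro s t hs hst ht
      obtain ⟨r, hr, hle⟩ := hF (k * s) (k * t) (by positivity)
        (mul_le_mul_of_nonneg_left hst hk0) (by nlinarith)
      exact (csInf_le (chain_bddBelow T l _ _) hr).trans hle
    refine (iInf₂_le (fun t => γ (k * t)) ⟨?_, by simp [hγ0, h0], by simp [hγk, hk]⟩).trans
      (hpl.trans ?_)
    · have hd : 0 ≤ dGlue T l x y := by
        apply Real.sInf_nonneg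
        rintro r ⟨k, c, idx, _, _, _, rfl⟩
        exact Finset.sum_nonneg fun j _ => dTri_nonneg' _ _ _ _ _
      have e : (ε : ℝ≥0∞) = ENNReal.ofReal (ε : ℝ) := by simp
      rw [e, ← ENNReal.ofReal_add hd hε'.le]
      apply ENNReal.ofReal_le_ofReal
      rw [Finset.sum_add_distrib] at hFk
      simp only [Finset.sum_const, Finset.card_range, nsmul_eq_mul] at hFk
      simp only [mul_one, mul_zero, hF0]
      linarith
    · refine hγ.comp (f := fun t : ℝ => (k : ℝ) * t) (by fun_prop) ?_
      intro t ht
      exact ⟨mul_nonneg hk0 ht.1, by nlinarith [ht.1, ht.2]⟩
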